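/- For every g ∈ Γ = Γ(W,γ) there exists k ∈ ℕ such that ⟨γ⟩ᵏ · g lies in the image of the canonical homomorphism Γ₊ → Γ, i.e. ⟨γ⟩ᵏ g can be represented by a positive word in the generators. -/

import Mathlib

/-!
Write `c = ⟨γ⟩`, and let `S ⊆ Γ` consist of `1` and the generators. Reflection length is invariant
under conjugation, so if `w ∈ [1,γ]` then `γ w⁻¹ ∈ [1,γ]` and `⟨γ w⁻¹⟩⟨w⟩ = c`. Hence `S` is stable
under `s ↦ c s⁻¹`, and applying this map twice, under conjugation by `c`; so is therefore the
submonoid of positive elements. If `p = cᵏ g` is positive, then so are `cᵏ (g s) = p s` and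
`cᵏ⁺¹ (g s⁻¹) = (c p c⁻¹) (c s⁻¹)` for `s ∈ S`.
-/

variable {B : Type*} {W : Type*} [Group W] {M : CoxeterMatrix B}

/-- The reflection length of `w`: the least `k` such that `w` is a product of `k`
reflections (conjugates of simple reflections). -/
noncomputable def rlen (cs : CoxeterSystem M W) (w : W) : ℕ :=
  sInf {k | ∃ l : List W, (∀ t ∈ l, cs.IsReflection t) ∧ l.length = k ∧ l.prod = w}

/-- The reflection (absolute) order on `W`: `u ≤ w` iff `ℓ(w) = ℓ(u) + ℓ(u⁻¹w)`. -/
def rle (cs : CoxeterSystem M W) (u w : W) : Prop :=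
  rlen cs w = rlen cs u + rlen cs (u⁻¹ * w)

/-- A Coxeter element: a conjugate of a product of all the simple reflections,
each occurring exactly once, in some order. -/
def IsCoxeterElement [Fintype B] (cs : CoxeterSystem M W) (γ : W) : Prop :=
  ∃ (v : W) (l : List B), l.Nodup ∧ (∀ i : B, i ∈ l) ∧ γ = v * cs.wordProd l * v⁻¹

/-- The generating set of the poset group/monoid: the interval `[1,γ]` minus the identity. -/
abbrev NCGen (cs : CoxeterSystem M W) (γ : W) : Type _ :=
  {w : W // w ≠ 1 ∧ rle cs w γ}

/-- The defining relations of the positive monoid `Γ₊(W,γ)`: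
`⟨w₁⟩⟨w₂⟩ = ⟨w₃⟩` whenever `w₁w₂ = w₃` in `W` and `ℓ(w₁) + ℓ(w₂) = ℓ(w₃)`. -/
def posRels (cs : CoxeterSystem M W) (γ : W) :
    FreeMonoid (NCGen cs γ) → FreeMonoid (NCGen cs γ) → Prop :=
  fun x y => ∃ w₁ w₂ w₃ : NCGen cs γ,
    x = FreeMonoid.of w₁ * FreeMonoid.of w₂ ∧ y = FreeMonoid.of w₃ ∧
    (w₁ : W) * (w₂ : W) = (w₃ : W) ∧
    rlen cs (w₁ : W) + rlen cs (w₂ : W) = rlen cs (w₃ : W)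

/-- The positive monoid `Γ₊(W,γ)`, presented by the generators `⟨w⟩`, `w ∈ [1,γ] \ {1}`,
and the relations `posRels`. -/
abbrev PosMonoid (cs : CoxeterSystem M W) (γ : W) := PresentedMonoid (posRels cs γ)

open Classical in
/-- The generator `⟨w⟩` of `Γ₊(W,γ)` for `w ∈ [1,γ]`, interpreting `⟨1⟩` as the
identity of the monoid (and defaulting to the identity off the interval). -/
noncomputable def pgen (cs : CoxeterSystem M W) (γ : W) (w : W) : PosMonoid cs γ :=
  if h : w ≠ 1 ∧ rle cs w γ then PresentedMonoid.of (posRels cs γ) ⟨w, h⟩ else 1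

/-- The defining relations of the poset group `Γ(W,γ)`:
`⟨w₁⟩⟨w₂⟩ = ⟨w₃⟩` whenever `w₁w₂ = w₃` in `W` and `ℓ(w₁) + ℓ(w₂) = ℓ(w₃)`. -/
def posetGroupRels (cs : CoxeterSystem M W) (γ : W) : Set (FreeGroup (NCGen cs γ)) :=
  {x | ∃ w₁ w₂ w₃ : NCGen cs γ,
    x = FreeGroup.of w₁ * FreeGroup.of w₂ * (FreeGroup.of w₃)⁻¹ ∧
    (w₁ : W) * (w₂ : W) = (w₃ : W) ∧
    rlen cs (w₁ : W) + rlen cs (w₂ : W) = rlen cs (w₃ : W)}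

/-- The poset group `Γ(W,γ)`, presented by the generators `⟨w⟩`, `w ∈ [1,γ] \ {1}`,
and the relations `posetGroupRels`. -/
abbrev PosetGroup (cs : CoxeterSystem M W) (γ : W) := PresentedGroup (posetGroupRels cs γ)

/-- The canonical monoid homomorphism `Γ₊(W,γ) → Γ(W,γ)`, induced by sending each
generator `⟨w⟩` of the monoid presentation to the corresponding group generator. -/
def canHom (cs : CoxeterSystem M W) (γ : W) : PosMonoid cs γ →* PosetGroup cs γ :=
  PresentedMonoid.lift (fun x => PresentedGroup.of (rels := posetGroupRels cs γ) x) (by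
    intro a b hab
    obtain ⟨w₁, w₂, w₃, ha, hb, hmul, hlen⟩ := hab
    subst ha hb
    have hmem : FreeGroup.of w₁ * FreeGroup.of w₂ * (FreeGroup.of w₃)⁻¹ ∈
        posetGroupRels cs γ := ⟨w₁, w₂, w₃, rfl, hmul, hlen⟩
    have h1 : (PresentedGroup.of (rels := posetGroupRels cs γ) w₁) *
        PresentedGroup.of w₂ * (PresentedGroup.of w₃)⁻¹ = 1 :=
      (QuotientGroup.eq_one_iff _).mpr (Subgroup.subset_normalClosure hmem)
    have h2 : (PresentedGroup.of (rels := posetGroupRels cs γ) w₁) *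
        PresentedGroup.of w₂ = PresentedGroup.of w₃ := mul_inv_eq_one.mp h1
    simpa using h2)

theorem rlen_one (cs : CoxeterSystem M W) : rlen cs (1 : W) = 0 :=
  Nat.sInf_eq_zero.mpr (Or.inl ⟨[], by simp, rfl, rfl⟩)

theorem rle_refl (cs : CoxeterSystem M W) (w : W) : rle cs w w := by
  unfold rle
  rw [inv_mul_cancel, rlen_one]
  omega

section Group

variable {G : Type*} [Group G] {S : Set G} {c g : G}

theorem conj_mem_mclosure (hS : ∀ s ∈ S, c * s * c⁻¹ ∈ S) (hg : g ∈ Submonoid.closure S) :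
    c * g * c⁻¹ ∈ Submonoid.closure S := by
  have h : S ⊆ (Submonoid.closure S).comap (MulAut.conj c).toMonoidHom := fun s hs =>
    Submonoid.subset_closure (hS s hs)
  exact Submonoid.closure_le.mpr h hg

theorem conj_mem_of_forall_mul_inv_mem (hS : ∀ s ∈ S, c * s⁻¹ ∈ S) (hg : g ∈ S) :
    c * g * c⁻¹ ∈ S := by
  simpa [mul_assoc] using hS _ (hS g hg)

theorem exists_pow_mul_mem_mclosure (hS : ∀ s ∈ S, c * s⁻¹ ∈ S) (hg : g ∈ Subgroup.closure S) :
    ∃ k : ℕ, c ^ k * g ∈ Submonoid.closure S := by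
  induction hg using Subgroup.closure_induction_right with
  | one => exact ⟨0, by simp⟩
  | mul_right g _ s hs ih =>
    obtain ⟨k, hk⟩ := ih
    exact ⟨k, by simpa only [mul_assoc] using mul_mem hk (Submonoid.subset_closure hs)⟩
  | mul_inv_cancel g _ s hs ih =>
    obtain ⟨k, hk⟩ := ih
    have hconj : c * (c ^ k * g) * c⁻¹ ∈ Submonoid.closure S :=
      conj_mem_mclosure (fun _ => conj_mem_of_forall_mul_inv_mem hS) hk
    have hsplit : c ^ (k + 1) * (g * s⁻¹) = c * (c ^ k * g) * c⁻¹ * (c * s⁻¹) := by group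
    exact ⟨k + 1, hsplit ▸ mul_mem hconj (Submonoid.subset_closure (hS s hs))⟩

end Group

section ReflectionOrder

theorem exists_reflections_prod_conj (cs : CoxeterSystem M W) (v : W) {w : W} {k : ℕ}
    (h : ∃ l : List W, (∀ t ∈ l, cs.IsReflection t) ∧ l.length = k ∧ l.prod = w) :
    ∃ l : List W, (∀ t ∈ l, cs.IsReflection t) ∧ l.length = k ∧ l.prod = v * w * v⁻¹ := by
  obtain ⟨l, hl, rfl, rfl⟩ := h
  refine ⟨l.map (MulAut.conj v), ?_, List.length_map _, ?_⟩
  · simpa using hl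
  · rw [← map_list_prod, MulAut.conj_apply]

theorem rlen_conj (cs : CoxeterSystem M W) (v w : W) : rlen cs (v * w * v⁻¹) = rlen cs w := by
  unfold rlen
  congr! 3 with k
  refine ⟨fun h => ?_, exists_reflections_prod_conj cs v⟩
  simpa [mul_assoc] using exists_reflections_prod_conj cs v⁻¹ h

variable {cs : CoxeterSystem M W} {γ w : W}

theorem rlen_mul_inv_add_rlen (h : rle cs w γ) : rlen cs (γ * w⁻¹) + rlen cs w = rlen cs γ := by
  have hconj : γ * w⁻¹ = w * (w⁻¹ * γ) * w⁻¹ := by group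
  rw [hconj, rlen_conj, h, add_comm]

theorem rle_mul_inv (h : rle cs w γ) : rle cs (γ * w⁻¹) γ := by
  have hcompl : (γ * w⁻¹)⁻¹ * γ = w := by group
  rw [rle, hcompl, rlen_mul_inv_add_rlen h]

end ReflectionOrder

section PosetGroup

variable {cs : CoxeterSystem M W} {γ : W}

theorem posetGroup_of_mul_of {w₁ w₂ w₃ : NCGen cs γ} (hmul : (w₁ : W) * w₂ = w₃)
    (hlen : rlen cs (w₁ : W) + rlen cs (w₂ : W) = rlen cs (w₃ : W)) :
    PresentedGroup.of (rels := posetGroupRels cs γ) w₁ * PresentedGroup.of w₂ =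
      PresentedGroup.of w₃ :=
  PresentedGroup.mk_eq_mk_of_mul_inv_mem ⟨w₁, w₂, w₃, rfl, hmul, hlen⟩

theorem mrange_canHom (cs : CoxeterSystem M W) (γ : W) :
    MonoidHom.mrange (canHom cs γ) =
      Submonoid.closure (Set.range (PresentedGroup.of (rels := posetGroupRels cs γ))) := by
  rw [MonoidHom.mrange_eq_map, ← PresentedMonoid.closure_range_of, MonoidHom.map_mclosure,
    ← Set.range_comp]
  rfl

theorem of_gamma_mul_inv_of_mem (hγ1 : γ ≠ 1) (x : NCGen cs γ) :
    PresentedGroup.of (rels := posetGroupRels cs γ) ⟨γ, hγ1, rle_refl cs γ⟩ *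
      (PresentedGroup.of x)⁻¹ ∈ insert 1 (Set.range PresentedGroup.of) := by
  obtain ⟨w, hw1, hw⟩ := x
  obtain rfl | hne := eq_or_ne γ w
  · exact Or.inl (mul_inv_cancel _)
  · let y : NCGen cs γ := ⟨γ * w⁻¹, mul_inv_eq_one.not.mpr hne, rle_mul_inv hw⟩
    refine Or.inr ⟨y, eq_mul_inv_of_mul_eq ?_⟩
    exact posetGroup_of_mul_of (inv_mul_cancel_right γ w) (rlen_mul_inv_add_rlen hw)

end PosetGroup

theorem gamma_power_mul_positive_general (cs : CoxeterSystem M W) (γ : W) (hγ1 : γ ≠ 1)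
    (g : PosetGroup cs γ) :
    ∃ k : ℕ,
      (PresentedGroup.of (rels := posetGroupRels cs γ) ⟨γ, hγ1, rle_refl cs γ⟩) ^ k * g ∈
        Set.range (canHom cs γ) := by
  set c : PosetGroup cs γ := PresentedGroup.of ⟨γ, hγ1, rle_refl cs γ⟩
  let S : Set (PosetGroup cs γ) := insert 1 (Set.range PresentedGroup.of)
  have hS : ∀ s ∈ S, c * s⁻¹ ∈ S := by
    rintro _ (rfl | ⟨x, rfl⟩)
    · exact Or.inr ⟨⟨γ, hγ1, rle_refl cs γ⟩, by simp [c]⟩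
    · exact of_gamma_mul_inv_of_mem hγ1 x
  have hg : g ∈ Subgroup.closure S := by
    simp [S, Subgroup.closure_insert_one, PresentedGroup.closure_range_of]
  have hrange : Set.range (canHom cs γ) = Submonoid.closure S := by
    rw [Submonoid.closure_insert_one, ← mrange_canHom, MonoidHom.coe_mrange]
  rw [hrange]
  exact exists_pow_mul_mem_mclosure hS hg

/-- Brady's Lemma: for every `g ∈ Γ(W,γ)` there is `k ∈ ℕ` such that `⟨γ⟩ᵏ g` is
represented by a positive word, i.e. lies in the image of `Γ₊(W,γ) → Γ(W,γ)`. -/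
theorem gamma_power_mul_positive [Fintype B] [Fintype W] (cs : CoxeterSystem M W) (γ : W)
    (hγ : IsCoxeterElement cs γ) (hγ1 : γ ≠ 1) (g : PosetGroup cs γ) :
    ∃ k : ℕ,
      (PresentedGroup.of (rels := posetGroupRels cs γ) ⟨γ, hγ1, rle_refl cs γ⟩) ^ k * g ∈
        Set.range (canHom cs γ) :=
  gamma_power_mul_positive_general cs γ hγ1 g
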